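/- There is no deterministic matrix M = ⟨V, ⊞_M, D⟩ with V a finite set such that ⊢_M = ⊢_⊞, and there is no such finite deterministic matrix with ⊩_M = ⊩_⊞. -/

import Mathlib

/-- Formulas built from countably many propositional variables with a single
binary connective `⊞` (platypus). -/
inductive Fm : Type where
  | var : ℕ → Fm
  | pl : Fm → Fm → Fm
deriving DecidableEq

namespace Fm

/-- The set of propositional variables occurring in a formula. -/
def vars : Fm → Set ℕ
  | var n => {n}
  | pl a b => vars a ∪ vars b

/-- A `𝔅_⊞`-valuation: a two-valued function such that
`v (φ ⊞ ψ) ∈ {min (v φ) (v ψ), max (v φ) (v ψ)}`. -/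
def IsVal (v : Fm → Bool) : Prop :=
  ∀ a b : Fm, v (a.pl b) = (v a && v b) ∨ v (a.pl b) = (v a || v b)

/-- The multiple-conclusion consequence `Γ ⊩_⊞ Δ`. -/
def Mc (Γ Δ : Set Fm) : Prop :=
  ∀ v : Fm → Bool, IsVal v → (∀ φ ∈ Γ, v φ = true) → ∃ ψ ∈ Δ, v ψ = true

/-- The single-conclusion consequence `Γ ⊢_⊞ φ`. -/
def Sc (Γ : Set Fm) (φ : Fm) : Prop := Mc Γ {φ}

end Fm

namespace Fm

/-- An `M`-valuation for a deterministic matrix `⟨V, op, D⟩`. -/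
def IsMatVal {V : Type} (op : V → V → V) (v : Fm → V) : Prop :=
  ∀ a b : Fm, v (a.pl b) = op (v a) (v b)

/-- The multiple-conclusion consequence `Γ ⊩_M Δ` of a deterministic matrix. -/
def MatMc {V : Type} (op : V → V → V) (D : Set V) (Γ Δ : Set Fm) : Prop :=
  ∀ v : Fm → V, IsMatVal op v → (∀ φ ∈ Γ, v φ ∈ D) → ∃ ψ ∈ Δ, v ψ ∈ D

/-- The single-conclusion consequence `Γ ⊢_M φ` of a deterministic matrix. -/
def MatSc {V : Type} (op : V → V → V) (D : Set V) (Γ : Set Fm) (φ : Fm) : Prop :=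
  MatMc op D Γ {φ}

end Fm

/-!
Over `ℕ∞` the operation `min x (y + 1)` always lies between `min x y` and `max x y`, so cutting the
value of a formula under it at any threshold gives a `𝔅_⊞`-valuation. With a variable `p` sent to
`⊤` and another variable `q` sent to `0`, the formula `p ⊞ (p ⊞ (⋯ ⊞ q))` with `n` copies of `p`
has value `n`; hence no such formula entails one with fewer copies of `p`. In a finite matrix two of
these formulas induce the same function of the values of `p` and `q`, so there the longer one does
entail the shorter one.
-/

namespace Fm

theorem isVal_iff {v : Fm → Bool} : IsVal v ↔ ∀ a b, v a = v b → v (a.pl b) = v a := by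
  refine forall₂_congr fun a b => ?_
  cases v a <;> cases v b <;> cases v (a.pl b) <;> decide

theorem isVal_decide_lt {α : Type*} [LinearOrder α] {h : Fm → α}
    (min_le : ∀ a b, min (h a) (h b) ≤ h (a.pl b)) (le_max : ∀ a b, h (a.pl b) ≤ max (h a) (h b))
    (c : α) : IsVal fun φ => decide (c < h φ) := by
  refine isVal_iff.2 fun a b hab => ?_
  rw [decide_eq_decide] at hab ⊢
  constructor
  · intro hc
    exact (lt_max_iff.1 (hc.trans_le (le_max a b))).elim id hab.2
  · intro hc
    exact (lt_min hc (hab.1 hc)).trans_le (min_le a b)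

/-- The value of a formula in `ℕ∞` when `p` is sent to `⊤`, all other variables to `0`, and `⊞` is
interpreted as `min x (y + 1)`. It counts the left factors `p` in `p ⊞ (p ⊞ (⋯ ⊞ q))`. -/
noncomputable def height (p : ℕ) : Fm → ℕ∞
  | var n => if n = p then ⊤ else 0
  | pl a b => min (height p a) (height p b + 1)

theorem min_height_le_height_pl (p : ℕ) (a b : Fm) :
    min (height p a) (height p b) ≤ height p (a.pl b) :=
  min_le_min_left _ le_self_add

theorem height_pl_le_max_height (p : ℕ) (a b : Fm) :
    height p (a.pl b) ≤ max (height p a) (height p b) :=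
  (min_le_left _ _).trans (le_max_left _ _)

theorem height_iterate_pl {p q : ℕ} (hqp : q ≠ p) (n : ℕ) :
    height p ((pl (var p))^[n] (var q)) = n := by
  induction n with
  | zero => simp [height, hqp]
  | succ n ih => simp [Function.iterate_succ_apply', height, ih]

theorem not_sc_iterate_pl_of_lt {p q m n : ℕ} (hqp : q ≠ p) (hmn : m < n) :
    ¬ Sc {(pl (var p))^[n] (var q)} ((pl (var p))^[m] (var q)) := by
  intro hsc
  have hval : IsVal fun φ => decide ((m : ℕ∞) < height p φ) :=
    isVal_decide_lt (min_height_le_height_pl p) (height_pl_le_max_height p) m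
  simpa [height_iterate_pl hqp, hmn] using hsc _ hval

theorem IsMatVal.map_iterate_pl {V : Type} {op : V → V → V} {v : Fm → V} (hv : IsMatVal op v)
    (a b : Fm) (n : ℕ) : v ((pl a)^[n] b) = (op (v a))^[n] (v b) :=
  Function.Semiconj.iterate_right (f := v) (hv a) n b

theorem matSc_iterate_pl_of_iterate_eq {V : Type} {op : V → V → V} {m n : ℕ}
    (h : ∀ x y, (op x)^[m] y = (op x)^[n] y) (D : Set V) (a b : Fm) :
    MatSc op D {(pl a)^[n] b} ((pl a)^[m] b) := by
  intro v hv hn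
  refine ⟨_, rfl, ?_⟩
  rw [hv.map_iterate_pl, h, ← hv.map_iterate_pl]
  exact hn _ rfl

theorem exists_lt_forall_iterate_eq {α β : Type*} [Finite α] [Finite β] (op : α → β → β) :
    ∃ m n : ℕ, m < n ∧ ∀ x y, (op x)^[m] y = (op x)^[n] y := by
  obtain ⟨m, n, hmn, heq⟩ := Set.finite_univ.exists_lt_map_eq_of_forall_mem
    (f := fun (k : ℕ) x => (op x)^[k]) fun _ => Set.mem_univ _
  exact ⟨m, n, hmn, fun x => congrFun (congrFun heq x)⟩

end Fm

open Fm in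
theorem platypus_no_finite_matrix_general {V : Type} [Finite V] (op : V → V → V) (D : Set V) :
    ∃ φ ψ : Fm, MatSc op D {φ} ψ ∧ ¬ Sc {φ} ψ := by
  obtain ⟨m, n, hmn, heq⟩ := exists_lt_forall_iterate_eq op
  exact ⟨(pl (var 0))^[n] (var 1), (pl (var 0))^[m] (var 1),
    matSc_iterate_pl_of_iterate_eq heq D _ _, not_sc_iterate_pl_of_lt one_ne_zero hmn⟩

open Fm in
/-- no finite deterministic matrix characterizes `⊢_⊞`, and no
finite deterministic matrix characterizes `⊩_⊞`. -/
theorem platypus_no_finite_matrix :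
    (¬ ∃ (V : Type) (_ : Finite V) (op : V → V → V) (D : Set V),
        ∀ (Γ : Set Fm) (φ : Fm), MatSc op D Γ φ ↔ Sc Γ φ) ∧
    (¬ ∃ (V : Type) (_ : Finite V) (op : V → V → V) (D : Set V),
        ∀ Γ Δ : Set Fm, MatMc op D Γ Δ ↔ Mc Γ Δ) := by
  constructor
  · rintro ⟨V, _, op, D, h⟩
    obtain ⟨φ, ψ, hmat, hsc⟩ := platypus_no_finite_matrix_general op D
    exact hsc ((h {φ} ψ).1 hmat)
  · rintro ⟨V, _, op, D, h⟩
    obtain ⟨φ, ψ, hmat, hsc⟩ := platypus_no_finite_matrix_general op D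
    exact hsc ((h {φ} {ψ}).1 hmat)
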